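/- Let (X,d) be a metric space, 0 < ε < π/2, p ∈ X and x,y ∈ X∖{p}. If there exists x' ∈ X such that d(p,y) = d(p,x') + d(x',y) and d(x,x') ≤ β(ε)·d(p,x), then the Euclidean comparison angle satisfies ∠̃xpy < ε. -/

import Mathlib

/-- The Euclidean comparison angle `∠̃ x p y`. -/
noncomputable def compAngle {X : Type*} [MetricSpace X] (p x y : X) : ℝ :=
  Real.arccos ((dist x p ^ 2 + dist y p ^ 2 - dist x y ^ 2) / (2 * dist x p * dist y p))

/-- The constant `β(ε) = (1 - cos ε) sin ε / (2 (1 + sin ε))`. -/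
noncomputable def beta (ε : ℝ) : ℝ :=
  (1 - Real.cos ε) * Real.sin ε / (2 * (1 + Real.sin ε))

/-!
Write `a = d(p, x)`, `b = d(p, y)` and `δ = d(x, x')`. Since `x'` lies between `p` and `y`, two
triangle inequalities through `x'` give `d(x, y) ≤ (b - a) + 2δ`, that is,
`d(x, y)² ≤ (a - b)² + 4δ(b - (a - δ))`. By the law of cosines in half-angle form, the comparison
angle is less than `ε` as soon as `d(x, y)² < (a - b)² + 4ab sin²(ε/2)`. Hence `δ < a sin²(ε/2)`
suffices, and `β(ε) = sin²(ε/2) · sin ε / (1 + sin ε)` is below `sin²(ε/2)`.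
-/

open Real

theorem arccos_lt_of_cos_lt {v θ : ℝ} (hθ : 0 < θ) (h : cos θ < v) : arccos v < θ := by
  by_contra! hle
  have hv_lt : v < 1 := arccos_pos.1 (hθ.trans_le hle)
  have hv_gt : -1 < v := (neg_one_le_cos θ).trans_lt h
  have hcos : cos (arccos v) ≤ cos θ := cos_le_cos_of_nonneg_of_le_pi hθ.le (arccos_le_pi v) hle
  rw [cos_arccos hv_gt.le hv_lt.le] at hcos
  exact hcos.not_gt h

theorem cos_eq_one_sub_two_mul_sin_half_sq (θ : ℝ) : cos θ = 1 - 2 * sin (θ / 2) ^ 2 := by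
  rw [← cos_two_mul_eq_one_sub, mul_div_cancel₀ θ two_ne_zero]

theorem compAngle_lt_of_dist_sq_lt {X : Type*} [MetricSpace X] {p x y : X} {ε : ℝ} (hε : 0 < ε)
    (h : dist x y ^ 2 <
      (dist p x - dist p y) ^ 2 + 4 * dist p x * dist p y * sin (ε / 2) ^ 2) :
    compAngle p x y < ε := by
  have ha : 0 < dist p x := dist_pos.2 <| by
    rintro rfl
    simp at h
  have hb : 0 < dist p y := dist_pos.2 <| by
    rintro rfl
    simp [dist_comm] at h
  refine arccos_lt_of_cos_lt hε ?_
  rw [dist_comm x p, dist_comm y p, lt_div_iff₀ (by positivity),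
    cos_eq_one_sub_two_mul_sin_half_sq]
  linarith

theorem dist_add_dist_le_dist_add_dist_add_two_mul_dist {X : Type*} [PseudoMetricSpace X]
    (p x y z : X) : dist p x + dist x y ≤ dist p z + dist z y + 2 * dist x z := by
  have hpx : dist p x ≤ dist p z + dist x z := dist_triangle_right p x z
  have hxy : dist x y ≤ dist x z + dist z y := dist_triangle x z y
  linarith

theorem beta_eq_sin_half_sq_mul (ε : ℝ) :
    beta ε = sin (ε / 2) ^ 2 * (sin ε / (1 + sin ε)) := by
  rw [beta, cos_eq_one_sub_two_mul_sin_half_sq, mul_div_assoc', sub_sub_cancel, mul_assoc,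
    mul_div_mul_left _ _ two_ne_zero]

theorem beta_lt_sin_half_sq {ε : ℝ} (hε : 0 < ε) (hεπ : ε ≤ π) :
    beta ε < sin (ε / 2) ^ 2 := by
  have hsin : 0 ≤ sin ε := sin_nonneg_of_nonneg_of_le_pi hε.le hεπ
  have hhalf : 0 < sin (ε / 2) := sin_pos_of_pos_of_lt_pi (by linarith) (by linarith)
  have hratio : sin ε / (1 + sin ε) < 1 := (div_lt_one (by linarith)).2 (by linarith)
  rw [beta_eq_sin_half_sq_mul]
  exact mul_lt_of_lt_one_right (pow_pos hhalf 2) hratio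

theorem compAngle_lt_of_near_geodesic_general {X : Type*} [MetricSpace X] {ε : ℝ} (hε : 0 < ε)
    {p x y x' : X} (hgeod : dist p y = dist p x' + dist x' y)
    (hnear : dist x x' < sin (ε / 2) ^ 2 * dist p x) :
    compAngle p x y < ε := by
  have hδ : dist x x' < dist p x :=
    hnear.trans_le (mul_le_of_le_one_left dist_nonneg (sin_sq_le_one _))
  have hdetour : dist p x + dist x y ≤ dist p y + 2 * dist x x' :=
    hgeod ▸ dist_add_dist_le_dist_add_dist_add_two_mul_dist p x y x'
  have hpx : dist p x ≤ dist p y + dist x x' := by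
    have htri : dist p x ≤ dist p x' + dist x x' := dist_triangle_right p x x'
    have hx'y : 0 ≤ dist x' y := dist_nonneg
    linarith
  refine compAngle_lt_of_dist_sq_lt hε ?_
  calc dist x y ^ 2
      ≤ (dist p y - dist p x + 2 * dist x x') ^ 2 :=
        pow_le_pow_left₀ dist_nonneg (by linarith) 2
    _ = (dist p x - dist p y) ^ 2 + 4 * (dist x x' * (dist p y + dist x x' - dist p x)) := by ring
    _ < (dist p x - dist p y) ^ 2 + 4 * (sin (ε / 2) ^ 2 * dist p x * dist p y) := by
        have hprod : dist x x' * (dist p y + dist x x' - dist p x) <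
            sin (ε / 2) ^ 2 * dist p x * dist p y :=
          mul_lt_mul'' hnear (by linarith) dist_nonneg (by linarith)
        linarith
    _ = (dist p x - dist p y) ^ 2 + 4 * dist p x * dist p y * sin (ε / 2) ^ 2 := by ring

/-- If `x'` lies on a "geodesic" from `p` to `y` (in the sense that
`d(p,y) = d(p,x') + d(x',y)`) and `d(x,x') ≤ β(ε) d(p,x)`, then the comparison
angle `∠̃ x p y` is less than `ε`. -/
theorem compAngle_lt_of_near_geodesic
    {X : Type*} [MetricSpace X] (ε : ℝ) (hε0 : 0 < ε) (hε : ε < Real.pi / 2)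
    (p x y : X) (hx : x ≠ p) (hy : y ≠ p) (x' : X)
    (h1 : dist p y = dist p x' + dist x' y)
    (h2 : dist x x' ≤ beta ε * dist p x) :
    compAngle p x y < ε := by
  exact compAngle_lt_of_near_geodesic_general hε0 h1 <| h2.trans_lt <|
    mul_lt_mul_of_pos_right (beta_lt_sin_half_sq hε0 (by linarith)) (dist_pos.2 hx.symm)
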